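/- Let q ≥ 1, R₀ > 0, δ > 0 and C_u > 0, and let ϱ : [0,∞) → ℝ be a continuous nonnegative function with ϱ(s) = 0 for s ≤ R₀ and ϱ(s) ≤ C_u δ^q/(R₀^q s⁴) for s ∈ [R₀, R₀ + δ]. Then, with m(r) = 4π∫₀^r s²ϱ(s) ds, for every σ ∈ [0, δ] one has m(R₀ + σ) ≤ 4πC_u δ^q σ/(R₀^{q+1}(R₀ + σ)) and consequently m(R₀ + σ)/(R₀ + σ) ≤ 4πC_u δ^{q+1}/R₀^{q+3}. -/

import Mathlib

open MeasureTheory Real Set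

/-!
With `ϱ ≤ K / s ^ 4` outside the vacuum ball of radius `R`, the mass integrand `s ^ 2 * ϱ s` is at
most `K / s ^ 2`, whose integral over `[R, r]` is `K * (1 / R - 1 / r) = K * (r - R) / (R * r)`.
The estimate is the case `K = Cu * (δ / R0) ^ q`.
-/

/-- The Hawking mass `m(r) = 4π ∫₀^r s² ϱ(s) ds` enclosed by the sphere of area radius `r`, for the
spherically symmetric energy density `ϱ`. -/
noncomputable def hawkingMass (ϱ : ℝ → ℝ) (r : ℝ) : ℝ :=
  4 * π * ∫ s in Ioc 0 r, s ^ 2 * ϱ s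

theorem integral_div_sq (K : ℝ) {a b : ℝ} (h : (0 : ℝ) ∉ uIcc a b) :
    ∫ s in a..b, K / s ^ 2 = K * (b - a) / (a * b) := by
  have ha : a ≠ 0 := fun ha => h (ha ▸ left_mem_uIcc)
  have hb : b ≠ 0 := fun hb => h (hb ▸ right_mem_uIcc)
  have hzpow : ∫ s in a..b, s ^ (-2 : ℤ) = a⁻¹ - b⁻¹ := by
    rw [integral_zpow (Or.inr ⟨by norm_num, h⟩)]
    norm_num [div_neg]
  calc ∫ s in a..b, K / s ^ 2 = K * ∫ s in a..b, s ^ (-2 : ℤ) := by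
        simp only [div_eq_mul_inv, zpow_neg, zpow_ofNat, intervalIntegral.integral_const_mul]
    _ = K * (b - a) / (a * b) := by
        rw [hzpow]
        field_simp

section Shell

variable {ϱ : ℝ → ℝ} {K R r : ℝ}

theorem hawkingMass_eq_of_vacuum (hR : 0 ≤ R) (hvac : ∀ s ∈ Ioc 0 R, ϱ s = 0) :
    hawkingMass ϱ r = 4 * π * ∫ s in Ioc R r, s ^ 2 * ϱ s := by
  rw [hawkingMass, setIntegral_eq_of_subset_of_forall_sdiff_eq_zero measurableSet_Ioc
    (Ioc_subset_Ioc_left hR)]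
  rintro s ⟨hs, hsR⟩
  have hs_le : s ≤ R := not_lt.mp fun hlt => hsR ⟨hlt, hs.2⟩
  rw [hvac s ⟨hs.1, hs_le⟩, mul_zero]

theorem setIntegral_sq_mul_le (hR : 0 < R) (hRr : R ≤ r) (hint : IntegrableOn ϱ (Icc R r))
    (hbound : ∀ s ∈ Icc R r, ϱ s ≤ K / s ^ 4) :
    ∫ s in Ioc R r, s ^ 2 * ϱ s ≤ K * (r - R) / (R * r) := by
  have hpos : ∀ s ∈ Icc R r, 0 < s := fun s hs => hR.trans_le hs.1
  have hzero : (0 : ℝ) ∉ uIcc R r := fun h => (hpos 0 (uIcc_of_le hRr ▸ h)).false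
  have hint_mass : IntegrableOn (fun s => s ^ 2 * ϱ s) (Icc R r) :=
    hint.continuousOn_mul (by fun_prop) isCompact_Icc
  have hint_bound : IntegrableOn (fun s => K / s ^ 2) (Icc R r) :=
    (continuousOn_const.div (by fun_prop)
      fun s hs => pow_ne_zero 2 (hpos s hs).ne').integrableOn_Icc
  calc ∫ s in Ioc R r, s ^ 2 * ϱ s ≤ ∫ s in Ioc R r, K / s ^ 2 := by
        refine setIntegral_mono_on (hint_mass.mono_set Ioc_subset_Icc_self)
          (hint_bound.mono_set Ioc_subset_Icc_self) measurableSet_Ioc fun s hs => ?_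
        have hs' := Ioc_subset_Icc_self hs
        have hs_pos := hpos s hs'
        calc s ^ 2 * ϱ s ≤ s ^ 2 * (K / s ^ 4) := by gcongr; exact hbound s hs'
          _ = K / s ^ 2 := by field_simp
    _ = K * (r - R) / (R * r) := by
        rw [← intervalIntegral.integral_of_le hRr, integral_div_sq K hzero]

theorem hawkingMass_le (hR : 0 < R) (hRr : R ≤ r) (hvac : ∀ s ∈ Ioc 0 R, ϱ s = 0)
    (hint : IntegrableOn ϱ (Icc R r)) (hbound : ∀ s ∈ Icc R r, ϱ s ≤ K / s ^ 4) :
    hawkingMass ϱ r ≤ 4 * π * (K * (r - R) / (R * r)) := by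
  rw [hawkingMass_eq_of_vacuum hR.le hvac]
  gcongr
  exact setIntegral_sq_mul_le hR hRr hint hbound

theorem hawkingMass_div_le (hK : 0 ≤ K) (hR : 0 < R) (hRr : R ≤ r)
    (hvac : ∀ s ∈ Ioc 0 R, ϱ s = 0) (hint : IntegrableOn ϱ (Icc R r))
    (hbound : ∀ s ∈ Icc R r, ϱ s ≤ K / s ^ 4) :
    hawkingMass ϱ r / r ≤ 4 * π * (K * (r - R) / R ^ 3) := by
  have hr : 0 < r := hR.trans_le hRr
  have : 0 ≤ r - R := sub_nonneg.mpr hRr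
  calc hawkingMass ϱ r / r ≤ 4 * π * (K * (r - R) / (R * r)) / r := by
        gcongr
        exact hawkingMass_le hR hRr hvac hint hbound
    _ ≤ 4 * π * (K * (r - R) / (R * R)) / R := by gcongr
    _ = 4 * π * (K * (r - R) / R ^ 3) := by field_simp

end Shell

theorem mass_estimate_general {q R0 δ Cu : ℝ} (hR0 : 0 < R0) (hδ : 0 < δ) (hCu : 0 ≤ Cu)
    {ϱ : ℝ → ℝ} (hint : IntegrableOn ϱ (Icc R0 (R0 + δ))) (hvac : ∀ s ∈ Ioc 0 R0, ϱ s = 0)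
    (hbound : ∀ s ∈ Icc R0 (R0 + δ), ϱ s ≤ Cu * δ ^ q / (R0 ^ q * s ^ 4)) :
    ∀ σ ∈ Icc (0 : ℝ) δ,
      hawkingMass ϱ (R0 + σ) ≤ 4 * π * Cu * δ ^ q * σ / (R0 ^ (q + 1) * (R0 + σ)) ∧
      hawkingMass ϱ (R0 + σ) / (R0 + σ) ≤ 4 * π * Cu * δ ^ (q + 1) / R0 ^ (q + 3) := by
  rintro σ ⟨hσ, hσδ⟩
  have hr : R0 ≤ R0 + σ := le_add_of_nonneg_right hσ
  have hsub : Icc R0 (R0 + σ) ⊆ Icc R0 (R0 + δ) := Icc_subset_Icc_right (by gcongr)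
  have hint_σ := hint.mono_set hsub
  have hbound_σ : ∀ s ∈ Icc R0 (R0 + σ), ϱ s ≤ Cu * δ ^ q / R0 ^ q / s ^ 4 := fun s hs =>
    (hbound s (hsub hs)).trans_eq (div_mul_eq_div_div _ _ _)
  constructor
  · calc hawkingMass ϱ (R0 + σ)
        ≤ 4 * π * (Cu * δ ^ q / R0 ^ q * (R0 + σ - R0) / (R0 * (R0 + σ))) :=
          hawkingMass_le hR0 hr hvac hint_σ hbound_σ
      _ = 4 * π * Cu * δ ^ q * σ / (R0 ^ (q + 1) * (R0 + σ)) := by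
          rw [rpow_add_one hR0.ne', add_sub_cancel_left]
          field_simp
  · have hR0_cube : R0 ^ (q + 3) = R0 ^ q * R0 ^ 3 := mod_cast rpow_add_natCast hR0.ne' q 3
    calc hawkingMass ϱ (R0 + σ) / (R0 + σ)
        ≤ 4 * π * (Cu * δ ^ q / R0 ^ q * (R0 + σ - R0) / R0 ^ 3) :=
          hawkingMass_div_le (by positivity) hR0 hr hvac hint_σ hbound_σ
      _ ≤ 4 * π * (Cu * δ ^ q / R0 ^ q * δ / R0 ^ 3) := by
          rw [add_sub_cancel_left]
          gcongr
      _ = 4 * π * Cu * δ ^ (q + 1) / R0 ^ (q + 3) := by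
          rw [hR0_cube, rpow_add_one hδ.ne']
          field_simp

/-- Mass estimate near the inner boundary of the shell:
`m(R₀+σ) ≤ 4πC_u δ^q σ/(R₀^{q+1}(R₀+σ))` and
`m(R₀+σ)/(R₀+σ) ≤ 4πC_u δ^{q+1}/R₀^{q+3}` for `σ ∈ [0,δ]`. -/
theorem mass_estimate (q R0 δ Cu : ℝ) (hq : 1 ≤ q) (hR0 : 0 < R0) (hδ : 0 < δ)
    (hCu : 0 < Cu) (ϱ : ℝ → ℝ) (hcont : Continuous ϱ) (hnn : ∀ s, 0 ≤ ϱ s)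
    (hvac : ∀ s ≤ R0, ϱ s = 0)
    (hbound : ∀ s ∈ Set.Icc R0 (R0 + δ), ϱ s ≤ Cu * δ ^ q / (R0 ^ q * s ^ 4)) :
    ∀ σ ∈ Set.Icc (0 : ℝ) δ,
      (4 * π * ∫ s in Set.Ioc (0 : ℝ) (R0 + σ), s ^ 2 * ϱ s) ≤
        4 * π * Cu * δ ^ q * σ / (R0 ^ (q + 1) * (R0 + σ)) ∧
      (4 * π * ∫ s in Set.Ioc (0 : ℝ) (R0 + σ), s ^ 2 * ϱ s) / (R0 + σ) ≤
        4 * π * Cu * δ ^ (q + 1) / R0 ^ (q + 3) := by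
  exact mass_estimate_general hR0 hδ hCu.le hcont.integrableOn_Icc (fun s hs => hvac s hs.2) hbound
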